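/- Let p be an odd prime, t, u ∈ F_p nonzero, and ψ ∈ SO(g_t) with characteristic polynomial x² + (2−v)x + 1, v ≠ 0. Then the sign of the permutation induced by ψ on the affine conic D_{t,u} = {(x,y) : x² − t y² = u} equals the Legendre symbol (v/p). -/

import Mathlib

/-- The special orthogonal group of the binary quadratic form
`g_t(x,y) = x² - t y²` over `𝔽_p`: invertible 2×2 matrices of determinant 1
preserving the form. -/
def SOgt (p : ℕ) [Fact p.Prime] (t : ZMod p) :
    Subgroup (Matrix (Fin 2) (Fin 2) (ZMod p))ˣ where
  carrier := {M | ((M : Matrix (Fin 2) (Fin 2) (ZMod p)).det = 1 ∧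
    ∀ v : Fin 2 → ZMod p,
      ((M : Matrix (Fin 2) (Fin 2) (ZMod p)).mulVec v 0) ^ 2
        - t * ((M : Matrix (Fin 2) (Fin 2) (ZMod p)).mulVec v 1) ^ 2
      = (v 0) ^ 2 - t * (v 1) ^ 2)}
  one_mem' := by
    constructor
    · simp
    · intro v; simp
  mul_mem' := by
    rintro A B ⟨hA, hAQ⟩ ⟨hB, hBQ⟩
    constructor
    · simp [Matrix.det_mul, hA, hB]
    · intro v
      rw [Units.val_mul, ← Matrix.mulVec_mulVec]
      rw [hAQ, hBQ]
  inv_mem' := by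
    rintro M ⟨hM, hMQ⟩
    have h : ((M⁻¹ : (Matrix (Fin 2) (Fin 2) (ZMod p))ˣ) : Matrix (Fin 2) (Fin 2) (ZMod p))
        * (M : Matrix (Fin 2) (Fin 2) (ZMod p)) = 1 := by
      rw [← Units.val_mul, inv_mul_cancel, Units.val_one]
    constructor
    · have := congrArg Matrix.det h
      rwa [Matrix.det_mul, hM, mul_one, Matrix.det_one] at this
    · intro v
      have h1 : (M : Matrix (Fin 2) (Fin 2) (ZMod p)).mulVec
          (((M⁻¹ : (Matrix (Fin 2) (Fin 2) (ZMod p))ˣ) : Matrix (Fin 2) (Fin 2) (ZMod p)).mulVec v) = v := by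
        rw [Matrix.mulVec_mulVec, ← Units.val_mul, mul_inv_cancel, Units.val_one, Matrix.one_mulVec]
      have h2 := hMQ (((M⁻¹ : (Matrix (Fin 2) (Fin 2) (ZMod p))ˣ) : Matrix (Fin 2) (Fin 2) (ZMod p)).mulVec v)
      rw [h1] at h2
      exact h2.symm

abbrev ConicD (p : ℕ) [Fact p.Prime] (t u : ZMod p) :=
  {w : Fin 2 → ZMod p // (w 0) ^ 2 - t * (w 1) ^ 2 = u}

abbrev SOgt.mat {p : ℕ} [Fact p.Prime] {t : ZMod p} (g : SOgt p t) :
    Matrix (Fin 2) (Fin 2) (ZMod p) := ((g : (Matrix (Fin 2) (Fin 2) (ZMod p))ˣ) : _)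

lemma two_ne_zero_aux (p : ℕ) [Fact p.Prime] (hp : Odd p) : (2 : ZMod p) ≠ 0 := by
  have : Fact (2 < p) := ⟨by
    have := (Fact.out : p.Prime).two_le
    rcases hp with ⟨k, hk⟩
    omega⟩
  intro h
  have h2 : ((2 : ℕ) : ZMod p) = 0 := by exact_mod_cast h
  rw [ZMod.natCast_eq_zero_iff] at h2
  have := Nat.le_of_dvd (by norm_num) h2
  have := this.trans_lt ‹Fact (2 < p)›.out
  omega

lemma SOgt.shape {p : ℕ} [Fact p.Prime] (hp : Odd p) {t : ZMod p} (g : SOgt p t) :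
    (SOgt.mat g) 1 1 = (SOgt.mat g) 0 0 ∧ (SOgt.mat g) 0 1 = t * (SOgt.mat g) 1 0 ∧
      (SOgt.mat g) 0 0 ^ 2 - t * (SOgt.mat g) 1 0 ^ 2 = 1 := by
  have h2 := two_ne_zero_aux p hp
  obtain ⟨hd, hq⟩ := g.2
  have e1 := hq ![1, 0]
  have e2 := hq ![0, 1]
  have e3 := hq ![1, 1]
  rw [Matrix.det_fin_two] at hd
  simp [Matrix.mulVec, dotProduct, Fin.sum_univ_two] at e1 e2 e3
  unfold SOgt.mat
  generalize ((g : (Matrix (Fin 2) (Fin 2) (ZMod p))ˣ) : Matrix (Fin 2) (Fin 2) (ZMod p)) = M at *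
  generalize M 0 0 = a at *
  generalize M 0 1 = c at *
  generalize M 1 0 = b at *
  generalize M 1 1 = d at *
  have e4 : a * c = t * b * d := by
    apply mul_left_cancel₀ h2
    linear_combination e3 - e1 - e2
  refine ⟨?_, ?_, e1⟩
  · linear_combination (-d) * e1 + a * hd + b * e4
  · linear_combination (-c) * e1 + a * e4 + t * b * hd

lemma SOgt.exists_of {p : ℕ} [Fact p.Prime] {t : ZMod p} (a b : ZMod p)
    (h : a ^ 2 - t * b ^ 2 = 1) : ∃ g : SOgt p t, (SOgt.mat g) = !![a, t * b; b, a] := by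
  have h1 : !![a, t * b; b, a] * !![a, -(t * b); -b, a] = 1 := by
    ext i j
    fin_cases i <;> fin_cases j <;> simp [Matrix.mul_apply, Fin.sum_univ_two] <;>
      first | linear_combination h | ring
  have h2 : !![a, -(t * b); -b, a] * !![a, t * b; b, a] = 1 := by
    ext i j
    fin_cases i <;> fin_cases j <;> simp [Matrix.mul_apply, Fin.sum_univ_two] <;>
      first | linear_combination h | ring
  refine ⟨⟨⟨_, _, h1, h2⟩, ?_, ?_⟩, rfl⟩
  · simp [Matrix.det_fin_two]
    linear_combination h
  · intro v
    simp [Matrix.mulVec, dotProduct, Fin.sum_univ_two]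
    linear_combination (v 0 ^ 2 - t * v 1 ^ 2) * h

lemma SOgt.ext_mat {p : ℕ} [Fact p.Prime] {t : ZMod p} {g h : SOgt p t}
    (e : (SOgt.mat g) = (SOgt.mat h)) : g = h := Subtype.ext (Units.ext e)

lemma SOgt.mat_mul {p : ℕ} [Fact p.Prime] {t : ZMod p} (g h : SOgt p t) :
    SOgt.mat (g * h) = (SOgt.mat g) * (SOgt.mat h) := rfl

lemma SOgt.cyclic {p : ℕ} [Fact p.Prime] (hp : Odd p) (t : ZMod p) (ht : t ≠ 0) :
    IsCyclic (SOgt p t) := by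
  have h2 := two_ne_zero_aux p hp
  let K := AlgebraicClosure (ZMod p)
  let ι := algebraMap (ZMod p) K
  have hι : Function.Injective ι := (algebraMap (ZMod p) K).injective
  obtain ⟨s, hs⟩ := IsAlgClosed.exists_pow_nat_eq (ι t) (n := 2) (by norm_num)
  have hs0 : s ≠ 0 := by
    rintro rfl
    apply ht
    apply hι
    rw [← hs]; simp
  have h2K : (2 : K) ≠ 0 := by
    have := (map_ne_zero ι).2 h2
    rwa [map_ofNat] at this
  let f : SOgt p t →* K :=
    { toFun := fun g => ι ((SOgt.mat g) 0 0) + s * ι ((SOgt.mat g) 1 0)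
      map_one' := by
        have : SOgt.mat (1 : SOgt p t) = 1 := rfl
        rw [this]; simp
      map_mul' := by
        intro x y
        obtain ⟨x1, x2, -⟩ := SOgt.shape hp x
        rw [SOgt.mat_mul]
        simp only [Matrix.mul_apply, Fin.sum_univ_two, x1, x2, map_add, map_mul, ← hs]
        ring }
  apply isCyclic_of_injective_ringHom f
  intro x y hxy
  obtain ⟨x1, x2, x3⟩ := SOgt.shape hp x
  obtain ⟨y1, y2, y3⟩ := SOgt.shape hp y
  have hxy : ι ((SOgt.mat x) 0 0) + s * ι ((SOgt.mat x) 1 0) = ι ((SOgt.mat y) 0 0) + s * ι ((SOgt.mat y) 1 0) := hxy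
  have x4 := congrArg ι x3
  have y4 := congrArg ι y3
  simp only [map_sub, map_mul, map_pow, map_one, ← hs] at x4 y4
  have hne : ι ((SOgt.mat x) 0 0) + s * ι ((SOgt.mat x) 1 0) ≠ 0 := by
    intro h0
    have : (1 : K) = 0 := by
      rw [← x4]
      linear_combination (ι ((SOgt.mat x) 0 0) - s * ι ((SOgt.mat x) 1 0)) * h0
    exact one_ne_zero this
  have hxy' : ι ((SOgt.mat x) 0 0) - s * ι ((SOgt.mat x) 1 0) = ι ((SOgt.mat y) 0 0) - s * ι ((SOgt.mat y) 1 0) := by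
    apply mul_left_cancel₀ hne
    linear_combination x4 - y4 - (ι ((SOgt.mat y) 0 0) - s * ι ((SOgt.mat y) 1 0)) * hxy
  have ha : (SOgt.mat x) 0 0 = (SOgt.mat y) 0 0 := by
    apply hι
    apply mul_left_cancel₀ h2K
    linear_combination hxy + hxy'
  have hb : (SOgt.mat x) 1 0 = (SOgt.mat y) 1 0 := by
    apply hι
    apply mul_left_cancel₀ (mul_ne_zero h2K hs0)
    linear_combination hxy - hxy'
  apply SOgt.ext_mat
  ext i j
  fin_cases i <;> fin_cases j
  · exact ha
  · exact x2.trans (by rw [hb]; exact y2.symm)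
  · exact hb
  · exact x1.trans (ha.trans y1.symm)

/-- the action on the conic -/
def SOgt.act {p : ℕ} [Fact p.Prime] (t u : ZMod p) :
    SOgt p t →* Equiv.Perm (ConicD p t u) :=
  MonoidHom.toHomPerm
    { toFun := fun g x => ⟨(SOgt.mat g).mulVec x.1, (g.2.2 x.1).trans x.2⟩
      map_one' := by
        funext x
        apply Subtype.ext
        exact Matrix.one_mulVec (x.1 : Fin 2 → ZMod p)
      map_mul' := by
        intro g h
        funext x
        apply Subtype.ext
        exact (Matrix.mulVec_mulVec x.1 (SOgt.mat g) (SOgt.mat h)).symm }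

lemma SOgt.act_val {p : ℕ} [Fact p.Prime] (t u : ZMod p) (g : SOgt p t) (x : ConicD p t u) :
    (SOgt.act t u g x).1 = (SOgt.mat g).mulVec x.1 := rfl

lemma SOgt.trans {p : ℕ} [Fact p.Prime] (t u : ZMod p) (hu : u ≠ 0) (x y : ConicD p t u) :
    ∃ g : SOgt p t, SOgt.act t u g x = y := by
  obtain ⟨x, hx⟩ := x
  obtain ⟨y, hy⟩ := y
  obtain ⟨g, hg⟩ := SOgt.exists_of (t := t) ((x 0 * y 0 - t * x 1 * y 1) / u)
    ((x 0 * y 1 - x 1 * y 0) / u) (by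
      field_simp
      linear_combination (y 0 ^ 2 - t * y 1 ^ 2) * hx + u * hy)
  refine ⟨g, ?_⟩
  apply Subtype.ext
  rw [SOgt.act_val, hg]
  funext i
  fin_cases i
  · simp [Matrix.mulVec, dotProduct, Fin.sum_univ_two]
    field_simp
    linear_combination y 0 * hx
  · simp [Matrix.mulVec, dotProduct, Fin.sum_univ_two]
    field_simp
    linear_combination y 1 * hx

lemma conic_nonempty {p : ℕ} [Fact p.Prime] (hp : Odd p) (t u : ZMod p) (ht : t ≠ 0) :
    Nonempty (ConicD p t u) := by
  classical
  obtain ⟨a, b, hab⟩ := FiniteField.exists_root_sum_quadratic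
    (f := (Polynomial.X ^ 2 - Polynomial.C u : Polynomial (ZMod p)))
    (g := Polynomial.C (-t) * Polynomial.X ^ 2)
    (Polynomial.degree_X_pow_sub_C (by norm_num) _)
    (Polynomial.degree_C_mul_X_pow 2 (neg_ne_zero.2 ht))
    (by rw [ZMod.card]; exact Nat.odd_iff.1 hp)
  refine ⟨⟨![a, b], ?_⟩⟩
  simp at hab
  simp
  linear_combination hab

def conicNeg {p : ℕ} [Fact p.Prime] (t u : ZMod p) : ConicD p t u → ConicD p t u :=
  fun x => ⟨-x.1, by simpa using x.2⟩

lemma conicNeg_ne {p : ℕ} [Fact p.Prime] (hp : Odd p) (t u : ZMod p) (hu : u ≠ 0)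
    (x : ConicD p t u) : conicNeg t u x ≠ x := by
  have h2 := two_ne_zero_aux p hp
  intro h
  have h1 : -x.1 = x.1 := congrArg Subtype.val h
  have e : ∀ i, x.1 i = 0 := by
    intro i
    have := congrFun h1 i
    simp only [Pi.neg_apply] at this
    apply mul_left_cancel₀ h2
    linear_combination -this
  apply hu
  rw [← x.2, e, e]; ring

lemma conic_even {p : ℕ} [Fact p.Prime] (hp : Odd p) (t u : ZMod p) (hu : u ≠ 0) :
    Even (Fintype.card (ConicD p t u)) := by
  have hinv : Function.Involutive (conicNeg t u) := by
    intro x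
    apply Subtype.ext
    exact neg_neg _
  have h := Equiv.Perm.card_fixedPoints_modEq (p := 2) (n := 1)
    (f := conicNeg t u) (by
      funext x
      exact hinv x)
  have h0 : Fintype.card (Function.fixedPoints (conicNeg t u)) = 0 := by
    rw [Fintype.card_eq_zero_iff]
    exact ⟨fun x => conicNeg_ne hp t u hu x.1 x.2⟩
  rw [h0] at h
  exact (Nat.even_iff).2 h

lemma sign_gen {p : ℕ} [Fact p.Prime] (hp : Odd p) (t u : ZMod p) (ht : t ≠ 0) (hu : u ≠ 0)
    (g : SOgt p t) (hg : ∀ x, x ∈ Subgroup.zpowers g) :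
    Equiv.Perm.sign (SOgt.act t u g) = -1 := by
  have key : ∀ x y, ∃ k : ℤ, (SOgt.act t u g ^ k) x = y := by
    intro x y
    obtain ⟨h, hh⟩ := SOgt.trans t u hu x y
    obtain ⟨k, hk⟩ := hg h
    refine ⟨k, ?_⟩
    rw [← map_zpow]
    simp only at hk
    rw [hk, hh]
  have mv : ∀ x, SOgt.act t u g x ≠ x := by
    intro x hx
    obtain ⟨k, hk⟩ := key x (conicNeg t u x)
    rw [Equiv.Perm.zpow_apply_eq_self_of_apply_eq_self hx] at hk
    exact conicNeg_ne hp t u hu x hk.symm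
  obtain ⟨x0⟩ := conic_nonempty hp t u ht
  have hc : (SOgt.act t u g).IsCycle := ⟨x0, mv x0, fun y _ => key x0 y⟩
  have hs : (SOgt.act t u g).support = Finset.univ := by
    ext x
    simpa using mv x
  rw [hc.sign, hs, Finset.card_univ, (conic_even hp t u hu).neg_one_pow]

open Polynomial in
/-- The sign of the permutation induced on the affine conic `x² - t y² = u` by
`ψ ∈ SO(g_t)` with characteristic polynomial `x² + (2 - v)x + 1` is the
quadratic character of `v`. -/
theorem sign_of_SOgt_on_conic (p : ℕ) [Fact p.Prime] (hp : Odd p)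
    (t u : ZMod p) (ht : t ≠ 0) (hu : u ≠ 0) (v : ZMod p) (hv : v ≠ 0)
    (ψ : SOgt p t)
    (hchar : ((ψ : (Matrix (Fin 2) (Fin 2) (ZMod p))ˣ) :
        Matrix (Fin 2) (Fin 2) (ZMod p)).charpoly = X ^ 2 + C (2 - v) * X + 1)
    (σ : Equiv.Perm {w : Fin 2 → ZMod p // (w 0) ^ 2 - t * (w 1) ^ 2 = u})
    (hσ : ∀ x, (σ x).val =
      ((ψ : (Matrix (Fin 2) (Fin 2) (ZMod p))ˣ) :
        Matrix (Fin 2) (Fin 2) (ZMod p)).mulVec x.val) :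
    Equiv.Perm.sign σ = (if IsSquare v then 1 else -1 : ℤˣ) := by
  have h2 := two_ne_zero_aux p hp
  have hσ' : σ = SOgt.act t u ψ := by
    ext1 x
    exact Subtype.ext (hσ x)
  have htr : v = 2 * (SOgt.mat ψ) 0 0 + 2 := by
    have h := congrArg (fun q => q.coeff 1) hchar
    have hd : (SOgt.mat ψ).det = 1 := ψ.2.1
    simp only [Matrix.charpoly_fin_two] at h
    simp [Matrix.trace_fin_two, coeff_one] at h
    obtain ⟨h1, -, -⟩ := SOgt.shape hp ψ
    unfold SOgt.mat at h1 ⊢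
    rw [h1] at h
    linear_combination h
  have hsq : IsSquare v ↔ IsSquare ψ := by
    obtain ⟨p1, p2, p3⟩ := SOgt.shape hp ψ
    constructor
    · rintro ⟨w, hw⟩
      have hw0 : w ≠ 0 := by
        rintro rfl
        exact hv (by simpa using hw)
      have hA : (SOgt.mat ψ) 0 0 = w ^ 2 / 2 - 1 := by
        field_simp
        linear_combination hw - htr
      rw [hA] at p3
      have p3' : 4 * t * (SOgt.mat ψ) 1 0 ^ 2 = w ^ 4 - 4 * w ^ 2 := by
        field_simp at p3
        linear_combination -p3
      obtain ⟨h, hh⟩ := SOgt.exists_of (t := t) (w / 2) ((SOgt.mat ψ) 1 0 / w) (by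
        field_simp
        linear_combination -p3')
      refine ⟨h, SOgt.ext_mat ?_⟩
      rw [SOgt.mat_mul, hh]
      ext i j
      fin_cases i <;> fin_cases j
      all_goals simp [Matrix.mul_apply, Fin.sum_univ_two]
      · rw [hA]; field_simp; linear_combination -p3'
      · rw [p2]; field_simp; ring
      · field_simp; ring
      · rw [p1, hA]; field_simp; linear_combination -p3'
    · rintro ⟨h, hh⟩
      obtain ⟨q1, q2, q3⟩ := SOgt.shape hp h
      refine ⟨2 * (SOgt.mat h) 0 0, ?_⟩
      rw [htr, hh, SOgt.mat_mul, Matrix.mul_apply, Fin.sum_univ_two, q2]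
      linear_combination -2 * q3
  obtain ⟨g, hg⟩ := (SOgt.cyclic hp t ht).exists_generator
  have hs := sign_gen hp t u ht hu g hg
  rw [hσ']
  split_ifs with hc
  · obtain ⟨h, hh⟩ := hsq.1 hc
    rw [hh, map_mul, map_mul]
    exact Int.units_mul_self _
  · obtain ⟨k, hk⟩ := hg ψ
    simp only at hk
    rcases Int.even_or_odd k with he | ho
    · exfalso
      apply hc
      rw [hsq, ← hk]
      exact he.isSquare_zpow g
    · rw [← hk, map_zpow, map_zpow, hs, ho.neg_one_zpow]
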